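/- For every ε > 0 there exists C_ε > 0 such that, uniformly in dyadic N, N₁, N₂, N₃ ≥ 1 and m ∈ ℤ, the operator norm of the base tensor h^{𝐍,(m)} viewed as a linear map from ℓ²((ℤ²)³) (variables (n₁, n₂, n₃)) to ℓ²(ℤ²) (variable n), i.e. the map sending f to n ↦ ∑_{n₁,n₂,n₃} h^{𝐍,(m)}(n, n₁, n₂, n₃) f(n₁, n₂, n₃), is at most C_ε · min( N₂ (min(N₁, N₃))^ε, (N_med N_min)^{1/2 + ε} ), where N_max ≥ N_med ≥ N_min is the decreasing rearrangement of N₁, N₂, N₃. -/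

import Mathlib

/-- Euclidean norm of a lattice point in `ℤ²`. -/
noncomputable def znorm (n : ℤ × ℤ) : ℝ := Real.sqrt ((n.1 : ℝ) ^ 2 + (n.2 : ℝ) ^ 2)

/-- Squared Euclidean norm `|n|²` of `n ∈ ℤ²`, as an integer. -/
def nsq (n : ℤ × ℤ) : ℤ := n.1 ^ 2 + n.2 ^ 2

/-- `φ(n̄) = |n|² − |n₁|² + |n₂|² − |n₃|²`. -/
def phiFn (n n₁ n₂ n₃ : ℤ × ℤ) : ℤ := nsq n - nsq n₁ + nsq n₂ - nsq n₃

/-- `N` is a dyadic number: `N = 2^k` for some integer `k ≥ 0`. -/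
def IsDyadic (N : ℝ) : Prop := ∃ k : ℕ, N = 2 ^ k

/-- `|n| ∼ N`: for dyadic `N ≥ 2` this means `N/2 < |n| ≤ N`; for `N = 1` it means `|n| ≤ 1`. -/
def simDyadic (N : ℝ) (n : ℤ × ℤ) : Prop :=
  (N = 1 ∧ znorm n ≤ 1) ∨ (N ≠ 1 ∧ N / 2 < znorm n ∧ znorm n ≤ N)

/-- Membership in the set `S^{𝐍,(m)}`. -/
def SMem (N N₁ N₂ N₃ : ℝ) (m : ℤ) (n n₁ n₂ n₃ : ℤ × ℤ) : Prop :=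
  n = n₁ - n₂ + n₃ ∧ n ≠ n₁ ∧ n ≠ n₃ ∧ phiFn n n₁ n₂ n₃ = m ∧
    simDyadic N n ∧ simDyadic N₁ n₁ ∧ simDyadic N₂ n₂ ∧ simDyadic N₃ n₃ 

-- The base tensor `h^{𝐍,(m)}`: the `{0,1}`-valued indicator of `S^{𝐍,(m)}`.
open Classical in
noncomputable def hten (N N₁ N₂ N₃ : ℝ) (m : ℤ) (n n₁ n₂ n₃ : ℤ × ℤ) : ℝ :=
  if SMem N N₁ N₂ N₃ m n n₁ n₂ n₃ then 1 else 0

/-- Minimum of three reals. -/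
noncomputable def dmin3 (a b c : ℝ) : ℝ := min a (min b c)

/-- Maximum of three reals. -/
noncomputable def dmax3 (a b c : ℝ) : ℝ := max a (max b c)

/-- Median of three reals. -/
noncomputable def dmed3 (a b c : ℝ) : ℝ := a + b + c - dmax3 a b c - dmin3 a b c

/-!
Each `(n₁, n₂, n₃)` determines `n = n₁ - n₂ + n₃`, so distinct rows of the tensor have disjoint
supports, and by Cauchy–Schwarz the square of the operator norm is at most the largest size of a
row.

A row is counted in two ways. Once `n₂` is fixed, `n₁` lies on a circle; and the vectors `n - n₁`,
`n - n₃` are nonzero with inner product `m / 2`, so once two of their coordinates are fixed the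
other two lie on a hyperbola `x y = K`. Circles are hyperbolas as well, `z z̄ = K` in `ℤ[i]`. What
makes the bounds uniform in `m` and `n` is that a hyperbola in a unique factorization domain has
few points in a box of sides `L` and `M`, wherever the box is: three points of it in the box force
`N(K) ≤ (L M)³`, because `K` divides the product of their coordinate differences, and then the
divisor bound for `K` is at most `C (L M)^ε`.
-/

section CardLE

variable {α β : Type*}

/-- `CardLE S B`: the set `S` is finite and has at most `B` elements, for a real bound `B`.
Finiteness is part of the notion because `Set.ncard` is `0` on infinite sets. -/
structure CardLE (S : Set α) (B : ℝ) : Prop where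
  finite : S.Finite
  ncard_le : (S.ncard : ℝ) ≤ B

namespace CardLE

variable {S T : Set α} {A B : ℝ}

theorem mono (hT : CardLE T A) (hST : S ⊆ T) (hAB : A ≤ B) : CardLE S B where
  finite := hT.finite.subset hST
  ncard_le := (Nat.cast_le.2 (Set.ncard_le_ncard hST hT.finite)).trans (hT.ncard_le.trans hAB)

theorem nonneg (hS : CardLE S B) : 0 ≤ B := (Nat.cast_nonneg _).trans hS.ncard_le

theorem union (hS : CardLE S A) (hT : CardLE T B) : CardLE (S ∪ T) (A + B) where
  finite := hS.finite.union hT.finite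
  ncard_le :=
    calc ((S ∪ T).ncard : ℝ) ≤ S.ncard + T.ncard := mod_cast Set.ncard_union_le S T
      _ ≤ A + B := add_le_add hS.ncard_le hT.ncard_le

theorem of_subsingleton (hS : S.Subsingleton) (hB : 1 ≤ B) : CardLE S B where
  finite := hS.finite
  ncard_le :=
    calc (S.ncard : ℝ) ≤ 1 := mod_cast (Set.ncard_le_one hS.finite).2 fun _ ha _ hb => hS ha hb
      _ ≤ B := hB

theorem of_injOn {T : Set β} {f : α → β} (hT : CardLE T B) (hf : S.MapsTo f T)
    (hinj : S.InjOn f) : CardLE S B where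
  finite := hT.finite.of_injOn hf hinj
  ncard_le := (Nat.cast_le.2 (Set.ncard_le_ncard_of_injOn f hf hinj hT.finite)).trans hT.ncard_le

theorem prod {T : Set β} (hS : CardLE S A) (hT : CardLE T B) : CardLE (S ×ˢ T) (A * B) where
  finite := hS.finite.prod hT.finite
  ncard_le := by
    rw [Set.ncard_prod, Nat.cast_mul]
    exact mul_le_mul hS.ncard_le hT.ncard_le (Nat.cast_nonneg _) hS.nonneg

theorem of_fiberwise {T : Set β} {f : α → β} (hT : CardLE T A) (hf : S.MapsTo f T) (hB : 0 ≤ B)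
    (hfib : ∀ a ∈ S, CardLE {a' ∈ S | f a' = f a} B) : CardLE S (A * B) := by
  classical
  have himage : CardLE (f '' S) A := hT.mono hf.image_subset le_rfl
  have hS : S.Finite := himage.finite.of_finite_fibers f <| by
    rintro _ ⟨a, ha, rfl⟩
    exact (hfib a ha).finite
  refine ⟨hS, ?_⟩
  lift S to Finset α using hS
  rw [← Finset.coe_image] at himage
  have hfiber : ∀ b ∈ S.image f, ({a ∈ S | f a = b}.card : ℝ) ≤ B := by
    simp only [Finset.forall_mem_image]
    intro a ha
    rw [← Set.ncard_coe_finset, Finset.coe_filter]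
    exact (hfib a ha).ncard_le
  calc ((S : Set α).ncard : ℝ) = ∑ b ∈ S.image f, ({a ∈ S | f a = b}.card : ℝ) := by
        rw [Set.ncard_coe_finset, Finset.card_eq_sum_card_image f, Nat.cast_sum]
    _ ≤ (S.image f).card * B := by
        rw [← nsmul_eq_mul]
        exact Finset.sum_le_card_nsmul _ _ _ hfiber
    _ ≤ A * B := by
        gcongr
        exact Set.ncard_coe_finset (S.image f) ▸ himage.ncard_le

end CardLE

end CardLE

section DivisorBound

theorem exists_natCast_add_one_le_mul_pow {r : ℝ} (hr : 1 < r) :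
    ∃ A, 1 ≤ A ∧ ∀ k : ℕ, (k + 1 : ℝ) ≤ A * r ^ k := by
  have hr' : 0 < r - 1 := sub_pos.2 hr
  refine ⟨max 1 (r - 1)⁻¹, le_max_left _ _, fun k => ?_⟩
  have hA : 1 ≤ max 1 (r - 1)⁻¹ * (r - 1) :=
    calc 1 = (r - 1)⁻¹ * (r - 1) := (inv_mul_cancel₀ hr'.ne').symm
      _ ≤ max 1 (r - 1)⁻¹ * (r - 1) := by gcongr; exact le_max_right _ _
  calc (k + 1 : ℝ) = k * 1 + 1 := by ring
    _ ≤ k * (max 1 (r - 1)⁻¹ * (r - 1)) + max 1 (r - 1)⁻¹ := by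
        gcongr
        exact le_max_left _ _
    _ = max 1 (r - 1)⁻¹ * (1 + k * (r - 1)) := by ring
    _ ≤ max 1 (r - 1)⁻¹ * r ^ k := by
        gcongr
        exact one_add_mul_sub_le_pow (by linarith) k

theorem exists_prod_count_add_one_le {ι : Type*} [DecidableEq ι] (w : ι → ℕ) [Northcott w]
    {ε : ℝ} (hε : 0 < ε) :
    ∃ C, 1 ≤ C ∧ ∀ s : Multiset ι, (∀ i ∈ s, 2 ≤ w i) →
      ∏ i ∈ s.toFinset, (s.count i + 1 : ℝ) ≤ C * ((s.map w).prod : ℝ) ^ ε := by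
  obtain ⟨A, hA, hAk⟩ := exists_natCast_add_one_le_mul_pow (Real.one_lt_rpow one_lt_two hε)
  obtain ⟨P, hP⟩ : ∃ P : ℕ, ∀ p ≥ P, (2 : ℝ) ≤ (p : ℝ) ^ ε :=
    Filter.eventually_atTop.1 <|
      ((tendsto_rpow_atTop hε).comp tendsto_natCast_atTop_atTop).eventually_ge_atTop 2
  have hfin : {i | w i ≤ P}.Finite := Northcott.finite_le P
  refine ⟨A ^ hfin.toFinset.card, one_le_pow₀ hA, fun s hs => ?_⟩
  have hfactor : ∀ i ∈ s.toFinset, (s.count i + 1 : ℝ) ≤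
      (if w i ≤ P then A else 1) * ((w i : ℝ) ^ ε) ^ s.count i := by
    intro i hi
    split_ifs with hiP
    · have : (2 : ℝ) ≤ w i := mod_cast hs i (Multiset.mem_toFinset.1 hi)
      refine (hAk _).trans ?_
      gcongr
    · calc (s.count i + 1 : ℝ) ≤ 2 ^ s.count i := mod_cast Nat.lt_two_pow_self
        _ ≤ ((w i : ℝ) ^ ε) ^ s.count i := by gcongr; exact hP _ (not_le.1 hiP).le
        _ = 1 * ((w i : ℝ) ^ ε) ^ s.count i := (one_mul _).symm
  have hprod : ∏ i ∈ s.toFinset, ((w i : ℝ) ^ ε) ^ s.count i = ((s.map w).prod : ℝ) ^ ε := by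
    rw [Finset.prod_multiset_map_count, Nat.cast_prod, ← Real.finsetProd_rpow _ _ (by simp)]
    refine Finset.prod_congr rfl fun i _ => ?_
    rw [Nat.cast_pow, ← Real.rpow_natCast_mul (by positivity),
      ← Real.rpow_mul_natCast (by positivity), mul_comm]
  calc ∏ i ∈ s.toFinset, (s.count i + 1 : ℝ)
      ≤ (∏ i ∈ s.toFinset, if w i ≤ P then A else 1) * ((s.map w).prod : ℝ) ^ ε := by
        rw [← hprod, ← Finset.prod_mul_distrib]
        exact Finset.prod_le_prod (fun _ _ => by positivity) hfactor
    _ ≤ A ^ hfin.toFinset.card * ((s.map w).prod : ℝ) ^ ε := by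
        gcongr
        rw [Finset.prod_ite, Finset.prod_const, Finset.prod_const_one, mul_one]
        exact pow_le_pow_right₀ hA (Finset.card_le_card fun i => by simp)

theorem finite_units_of_northcott {M : Type*} [Monoid M] (N : M →* ℕ) [Northcott N] :
    Finite Mˣ := by
  have : Finite {x | N x ≤ 1} := (Northcott.finite_le 1).to_subtype
  refine Finite.of_injective (fun u : Mˣ => (⟨u, ?_⟩ : {x | N x ≤ 1})) fun u v huv => ?_
  · exact (Nat.isUnit_iff.1 (u.isUnit.map N)).le
  · exact Units.ext (congrArg Subtype.val huv)

open UniqueFactorizationMonoid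

variable {M : Type*} [CommMonoidWithZero M] [UniqueFactorizationMonoid M]

theorem prod_map_normalizedFactors [NormalizationMonoid M] {P : Type*} [CommMonoid P]
    [Subsingleton Pˣ] (N : M →* P) {a : M} (ha : a ≠ 0) :
    ((normalizedFactors a).map N).prod = N a := by
  rw [← map_multiset_prod]
  exact associated_iff_eq.1 ((prod_normalizedFactors ha).map N)

theorem cardLE_setOf_dvd [NormalizationMonoid M] [DecidableEq M] [Finite Mˣ] {a : M}
    (ha : a ≠ 0) :
    CardLE {x | x ∣ a}
      ((∏ p ∈ (normalizedFactors a).toFinset, ((normalizedFactors a).count p + 1 : ℝ)) *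
        Nat.card Mˣ) := by
  have hIic : CardLE (Set.Iic (normalizedFactors a))
      (∏ p ∈ (normalizedFactors a).toFinset, ((normalizedFactors a).count p + 1 : ℝ)) := by
    refine ⟨Set.finite_Iic _, le_of_eq ?_⟩
    rw [← Finset.coe_Iic, Set.ncard_coe_finset, Multiset.card_Iic]
    push_cast
    rfl
  have hne : ∀ x, x ∣ a → x ≠ 0 := fun x hx => ne_zero_of_dvd_ne_zero ha hx
  refine hIic.of_fiberwise (f := normalizedFactors) (fun x hx => ?_) (Nat.cast_nonneg _) ?_
  · exact (dvd_iff_normalizedFactors_le_normalizedFactors (hne x hx) ha).1 hx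
  have hrange : ∀ x₀ : M, CardLE (Set.range fun u : Mˣ => x₀ * u) (Nat.card Mˣ) := fun x₀ => by
    refine ⟨Set.finite_range _, Nat.cast_le.2 ?_⟩
    rw [← Nat.card_coe_set_eq]
    exact Finite.card_range_le _
  refine fun x₀ hx₀ => (hrange x₀).mono ?_ le_rfl
  rintro x ⟨hx, hxx₀⟩
  exact (associated_iff_normalizedFactors_eq_normalizedFactors (hne x₀ hx₀) (hne x hx)).2
    hxx₀.symm

theorem exists_cardLE_setOf_dvd (N : M →* ℕ) [Northcott N] (hN : ∀ p, Prime p → 2 ≤ N p) {ε : ℝ}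
    (hε : 0 < ε) :
    ∃ C, 1 ≤ C ∧ ∀ a : M, a ≠ 0 → CardLE {x | x ∣ a} (C * (N a : ℝ) ^ ε) := by
  classical
  let : NormalizationMonoid M :=
    UniqueFactorizationMonoid.strongNormalizationMonoid.toNormalizationMonoid
  have := finite_units_of_northcott N
  obtain ⟨C, hC, hCs⟩ := exists_prod_count_add_one_le N hε
  have hunits : (1 : ℝ) ≤ Nat.card Mˣ := mod_cast Nat.card_pos
  refine ⟨C * Nat.card Mˣ, one_le_mul_of_one_le_of_one_le hC hunits, fun a ha => ?_⟩
  have hprod := hCs (normalizedFactors a) fun p hp => hN p (prime_of_normalized_factor p hp)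
  rw [prod_map_normalizedFactors N ha] at hprod
  refine (cardLE_setOf_dvd ha).mono subset_rfl ?_
  rw [mul_right_comm]
  gcongr

theorem map_pos_of_two_le_map_prime (N : M →* ℕ) (hN : ∀ p, Prime p → 2 ≤ N p) {a : M}
    (ha : a ≠ 0) : 0 < N a := by
  induction a using UniqueFactorizationMonoid.induction_on_prime with
  | h₁ => exact absurd rfl ha
  | h₂ x hx => exact Nat.pos_of_ne_zero (Nat.isUnit_iff.1 (hx.map N) ▸ one_ne_zero)
  | h₃ b p hb hp ih =>
    rw [map_mul]
    exact Nat.mul_pos (two_pos.trans_le (hN p hp)) (ih hb)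

end DivisorBound

section Hyperbola

variable {R : Type*} [CommRing R] [IsDomain R]

theorem sq_mul_eq_prod_sub_mul_sub {K x₁ x₂ x₃ y₁ y₂ y₃ : R} (hK : K ≠ 0)
    (h₁ : x₁ * y₁ = K) (h₂ : x₂ * y₂ = K) (h₃ : x₃ * y₃ = K) :
    ((x₂ - x₁) * (y₃ - y₁) - (x₃ - x₁) * (y₂ - y₁)) ^ 2 * K =
      (x₁ - x₂) * (y₂ - y₁) * ((x₂ - x₃) * (y₃ - y₂)) * ((x₃ - x₁) * (y₁ - y₃)) := by
  -- `D` is twice the signed area of the triangle with vertices `(xᵢ, yᵢ)`. On the hyperbola it is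
  -- `± K` times a Vandermonde product divided by `x₁x₂x₃`, and likewise in the other coordinate.
  set D := (x₂ - x₁) * (y₃ - y₁) - (x₃ - x₁) * (y₂ - y₁) with hD
  have hx : D * (x₁ * x₂ * x₃) = K * ((x₁ - x₂) * (x₂ - x₃) * (x₃ - x₁)) := by
    rw [hD]
    linear_combination x₂ * x₃ * (x₃ - x₂) * h₁ + x₁ * x₃ * (x₁ - x₃) * h₂ +
      x₁ * x₂ * (x₂ - x₁) * h₃
  have hy : D * (y₁ * y₂ * y₃) = K * ((y₂ - y₁) * (y₃ - y₂) * (y₁ - y₃)) := by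
    rw [hD]
    linear_combination y₂ * y₃ * (y₂ - y₃) * h₁ + y₁ * y₃ * (y₃ - y₁) * h₂ +
      y₁ * y₂ * (y₁ - y₂) * h₃
  refine mul_left_cancel₀ (pow_ne_zero 2 hK) ?_
  calc K ^ 2 * (D ^ 2 * K) = D ^ 2 * (x₁ * y₁ * (x₂ * y₂) * (x₃ * y₃)) := by
        rw [h₁, h₂, h₃]
        ring
    _ = D * (x₁ * x₂ * x₃) * (D * (y₁ * y₂ * y₃)) := by ring
    _ = K ^ 2 * _ := by
        rw [hx, hy]
        ring

theorem injOn_fst_setOf_mul_eq {K : R} (hK : K ≠ 0) :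
    Set.InjOn Prod.fst {z : R × R | z.1 * z.2 = K} := by
  intro z hz w hw hzw
  refine Prod.ext hzw (mul_left_cancel₀ (left_ne_zero_of_mul (hz.trans_ne hK)) ?_)
  rw [hz, hzw, hw]

theorem sub_mul_sub_ne_zero_of_mul_eq {K : R} (hK : K ≠ 0) {z w : R × R} (hz : z.1 * z.2 = K)
    (hw : w.1 * w.2 = K) (hzw : z ≠ w) : (z.1 - w.1) * (w.2 - z.2) ≠ 0 := by
  refine mul_ne_zero (sub_ne_zero.2 fun h => hzw ?_) (sub_ne_zero.2 fun h => hzw ?_)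
  · exact injOn_fst_setOf_mul_eq hK hz hw h
  · refine Prod.swap_injective (injOn_fst_setOf_mul_eq hK ?_ ?_ h.symm)
    · exact (mul_comm _ _).trans hz
    · exact (mul_comm _ _).trans hw

variable [UniqueFactorizationMonoid R] (N : R →* ℕ)

theorem map_le_mul_pow_three_of_mul_eq (hN : ∀ p, Prime p → 2 ≤ N p) {K : R} (hK : K ≠ 0)
    {L M : ℝ} {S : Set (R × R)} (hS : ∀ z ∈ S, z.1 * z.2 = K)
    (hLM : ∀ z ∈ S, ∀ w ∈ S, (N (z.1 - w.1) : ℝ) ≤ L ∧ (N (z.2 - w.2) : ℝ) ≤ M) {a b c : R × R}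
    (ha : a ∈ S) (hb : b ∈ S) (hc : c ∈ S) (hab : a ≠ b) (hbc : b ≠ c) (hca : c ≠ a) :
    (N K : ℝ) ≤ (L * M) ^ 3 := by
  have hsub : ∀ z ∈ S, ∀ w ∈ S, (N ((z.1 - w.1) * (w.2 - z.2)) : ℝ) ≤ L * M := by
    intro z hz w hw
    rw [map_mul, Nat.cast_mul]
    exact mul_le_mul (hLM z hz w hw).1 (hLM w hw z hz).2 (Nat.cast_nonneg _)
      ((Nat.cast_nonneg _).trans (hLM z hz w hw).1)
  have hLM₀ : 0 ≤ L * M := (Nat.cast_nonneg _).trans (hsub a ha a ha)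
  have hprod := sq_mul_eq_prod_sub_mul_sub hK (hS a ha) (hS b hb) (hS c hc)
  set D := (b.1 - a.1) * (c.2 - a.2) - (c.1 - a.1) * (b.2 - a.2)
  have hD : D ≠ 0 := by
    have hne := mul_ne_zero
      (mul_ne_zero (sub_mul_sub_ne_zero_of_mul_eq hK (hS a ha) (hS b hb) hab)
        (sub_mul_sub_ne_zero_of_mul_eq hK (hS b hb) (hS c hc) hbc))
      (sub_mul_sub_ne_zero_of_mul_eq hK (hS c hc) (hS a ha) hca)
    exact right_ne_zero_of_mul (pow_two D ▸ left_ne_zero_of_mul (hprod.trans_ne hne))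
  calc (N K : ℝ) ≤ N (D ^ 2 * K) := by
        rw [map_mul, map_pow]
        exact mod_cast Nat.le_mul_of_pos_left _ (pow_pos (map_pos_of_two_le_map_prime N hN hD) 2)
    _ ≤ L * M * (L * M) * (L * M) := by
        rw [hprod, map_mul, map_mul, Nat.cast_mul, Nat.cast_mul]
        gcongr
        exacts [hsub a ha b hb, hsub b hb c hc, hsub c hc a ha]
    _ = (L * M) ^ 3 := by ring

theorem exists_cardLE_of_mul_eq [Northcott N] (hN : ∀ p, Prime p → 2 ≤ N p) {ε : ℝ}
    (hε : 0 < ε) :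
    ∃ C, 1 ≤ C ∧ ∀ K ≠ 0, ∀ L M : ℝ, 1 ≤ L → 1 ≤ M → ∀ S : Set (R × R),
      (∀ z ∈ S, z.1 * z.2 = K) →
      (∀ z ∈ S, ∀ w ∈ S, (N (z.1 - w.1) : ℝ) ≤ L ∧ (N (z.2 - w.2) : ℝ) ≤ M) →
      CardLE S (C * (L * M) ^ ε) := by
  obtain ⟨C, hC, hdvd⟩ := exists_cardLE_setOf_dvd N hN (ε := ε / 3) (by positivity)
  refine ⟨2 * C, by linarith, fun K hK L M hL hM S hS hLM => ?_⟩
  have hcard : CardLE S (C * (N K : ℝ) ^ (ε / 3)) :=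
    (hdvd K hK).of_injOn (fun z hz => ⟨z.2, (hS z hz).symm⟩)
      ((injOn_fst_setOf_mul_eq hK).mono hS)
  refine ⟨hcard.finite, ?_⟩
  have hpow : 1 ≤ (L * M) ^ ε :=
    Real.one_le_rpow (one_le_mul_of_one_le_of_one_le hL hM) hε.le
  obtain hle | hlt := le_or_gt S.ncard 2
  · calc (S.ncard : ℝ) ≤ 2 := mod_cast hle
      _ ≤ 2 * C * (L * M) ^ ε := by nlinarith
  · obtain ⟨a, ha, b, hb, c, hc, hab, hac, hbc⟩ := (Set.two_lt_ncard hcard.finite).1 hlt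
    have hK3 := map_le_mul_pow_three_of_mul_eq N hN hK hS hLM ha hb hc hab hbc hac.symm
    calc (S.ncard : ℝ) ≤ C * (N K : ℝ) ^ (ε / 3) := hcard.ncard_le
      _ ≤ C * ((L * M) ^ 3) ^ (ε / 3) := by gcongr
      _ = C * (L * M) ^ ε := by
          rw [← Real.rpow_natCast_mul (by positivity)]
          norm_num [mul_div_cancel₀]
      _ ≤ 2 * C * (L * M) ^ ε := by nlinarith

end Hyperbola

section Lattice

open Metric

instance northcott_natAbsHom : Northcott (Int.natAbsHom : ℤ →* ℕ) where
  finite_le b := (Set.finite_Icc (-(b : ℤ)) b).subset fun x (hx : x.natAbs ≤ b) => by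
    rw [Set.mem_Icc]
    omega

/-- The lattice point `(a, b)` seen as the Gaussian integer `a + bi`, so that lattice points on a
circle become factors of the squared radius. -/
def toGaussianInt (z : ℤ × ℤ) : GaussianInt := ⟨z.1, z.2⟩

/-- The norm `a + bi ↦ a² + b²` of the Gaussian integers with values in `ℕ`, the form in which it
can serve as a Northcott height. -/
def gaussianNorm : GaussianInt →* ℕ := (Int.natAbsHom : ℤ →* ℕ).comp Zsqrtd.normMonoidHom

theorem toGaussianInt_injective : Function.Injective toGaussianInt := fun _ _ h =>
  Prod.ext (congrArg Zsqrtd.re h) (congrArg Zsqrtd.im h)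

theorem toGaussianInt_mul_star (z : ℤ × ℤ) :
    toGaussianInt z * star (toGaussianInt z) = (nsq z : GaussianInt) := by
  rw [← Zsqrtd.norm_eq_mul_conj, Zsqrtd.norm_def, nsq]
  simp only [toGaussianInt]
  ring_nf

theorem gaussianNorm_star (x : GaussianInt) : gaussianNorm (star x) = gaussianNorm x :=
  congrArg Int.natAbs (Zsqrtd.norm_conj x)

theorem natCast_gaussianNorm_toGaussianInt (z : ℤ × ℤ) :
    (gaussianNorm (toGaussianInt z) : ℤ) = nsq z := by
  rw [nsq, pow_two, pow_two, ← Int.natAbs_mul_self' z.1, ← Int.natAbs_mul_self' z.2]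
  exact_mod_cast GaussianInt.natAbs_norm_eq (toGaussianInt z)

instance northcott_gaussianNorm : Northcott gaussianNorm where
  finite_le b := by
    have hfin := ((Set.finite_Icc (-(b : ℤ)) b).prod (Set.finite_Icc (-(b : ℤ)) b)).image
      toGaussianInt
    refine hfin.subset fun x (hx : gaussianNorm x ≤ b) => ⟨(x.re, x.im), ?_, rfl⟩
    have hle : x.re ^ 2 + x.im ^ 2 ≤ b :=
      (natCast_gaussianNorm_toGaussianInt (x.re, x.im)).symm.trans_le (mod_cast hx)
    have habs : ∀ u v : ℤ, u ^ 2 + v ^ 2 ≤ b → |u| ≤ b := fun u v h =>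
      calc |u| = u.natAbs := (Int.natCast_natAbs u).symm
        _ ≤ u ^ 2 := Int.natAbs_le_self_sq u
        _ ≤ b := (le_add_of_nonneg_right (sq_nonneg v)).trans h
    exact ⟨abs_le.1 (habs _ _ hle), abs_le.1 (habs _ _ (add_comm (x.re ^ 2) _ ▸ hle))⟩

theorem two_le_gaussianNorm_of_prime {p : GaussianInt} (hp : Prime p) : 2 ≤ gaussianNorm p := by
  have h0 : gaussianNorm p ≠ 0 := fun h =>
    hp.ne_zero (GaussianInt.norm_eq_zero.1 (Int.natAbs_eq_zero.1 h))
  have h1 : gaussianNorm p ≠ 1 := fun h => hp.not_isUnit (Zsqrtd.norm_eq_one_iff.1 h)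
  omega

theorem dist_le_two_mul_of_mem_closedBall {X : Type*} [PseudoMetricSpace X] {x y c : X} {r : ℝ}
    (hx : x ∈ closedBall c r) (hy : y ∈ closedBall c r) : dist x y ≤ 2 * r := by
  rw [two_mul]
  exact dist_triangle_right x y c |>.trans (add_le_add hx hy)

theorem exists_cardLE_int_mul_eq {ε : ℝ} (hε : 0 < ε) :
    ∃ C, 1 ≤ C ∧ ∀ (K c d : ℤ) (L M : ℝ), K ≠ 0 → 1 ≤ L → 1 ≤ M →
      CardLE {z : ℤ × ℤ | z.1 * z.2 = K ∧ z.1 ∈ closedBall c L ∧ z.2 ∈ closedBall d M}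
        (C * (L * M) ^ ε) := by
  obtain ⟨C, hC, hcount⟩ := exists_cardLE_of_mul_eq (Int.natAbsHom : ℤ →* ℕ)
    (fun p hp => (Int.prime_iff_natAbs_prime.1 hp).two_le) hε
  have hdist : ∀ {x y c : ℤ} {r : ℝ}, x ∈ closedBall c r → y ∈ closedBall c r →
      ((x - y).natAbs : ℝ) ≤ 2 * r := fun {x y c r} hx hy => by
    rw [Nat.cast_natAbs, Int.cast_abs, Int.cast_sub, ← Int.dist_eq]
    exact dist_le_two_mul_of_mem_closedBall hx hy
  refine ⟨C * 4 ^ ε, one_le_mul_of_one_le_of_one_le hC (Real.one_le_rpow (by norm_num) hε.le),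
    fun K c d L M hK hL hM => ?_⟩
  refine (hcount K hK (2 * L) (2 * M) (by linarith) (by linarith) _ (fun z hz => hz.1)
    fun z hz w hw => ⟨hdist hz.2.1 hw.2.1, hdist hz.2.2 hw.2.2⟩).mono subset_rfl (le_of_eq ?_)
  rw [mul_assoc C, ← Real.mul_rpow (by norm_num) (by positivity)]
  ring_nf

theorem nsq_sub_le_of_mem_closedBall {z w c : ℤ × ℤ} {L : ℝ} (hz : z ∈ closedBall c L)
    (hw : w ∈ closedBall c L) : (nsq (z - w) : ℝ) ≤ 8 * L ^ 2 := by
  have hzw := dist_le_two_mul_of_mem_closedBall hz hw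
  rw [Prod.dist_eq, max_le_iff, Int.dist_eq, Int.dist_eq] at hzw
  have h₁ := sq_le_sq' (abs_le.1 hzw.1).1 (abs_le.1 hzw.1).2
  have h₂ := sq_le_sq' (abs_le.1 hzw.2).1 (abs_le.1 hzw.2).2
  rw [nsq]
  push_cast [Prod.fst_sub, Prod.snd_sub]
  linarith

theorem nsq_eq_zero {z : ℤ × ℤ} : nsq z = 0 ↔ z = 0 := by
  rw [nsq, add_eq_zero_iff_of_nonneg (sq_nonneg _) (sq_nonneg _), sq_eq_zero_iff, sq_eq_zero_iff,
    Prod.ext_iff, Prod.fst_zero, Prod.snd_zero]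

theorem exists_cardLE_nsq_eq {ε : ℝ} (hε : 0 < ε) :
    ∃ C, 1 ≤ C ∧ ∀ (K : ℤ) (c : ℤ × ℤ) (L : ℝ), 1 ≤ L →
      CardLE {z : ℤ × ℤ | nsq z = K ∧ z ∈ closedBall c L} (C * L ^ ε) := by
  obtain ⟨C, hC, hcount⟩ := exists_cardLE_of_mul_eq gaussianNorm
    (fun p => two_le_gaussianNorm_of_prime) (ε := ε / 4) (by positivity)
  have hC' : 1 ≤ C * 64 ^ (ε / 4) :=
    one_le_mul_of_one_le_of_one_le hC (Real.one_le_rpow (by norm_num) (by positivity))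
  refine ⟨C * 64 ^ (ε / 4), hC', fun K c L hL => ?_⟩
  set S := {z : ℤ × ℤ | nsq z = K ∧ z ∈ closedBall c L}
  obtain rfl | hK := eq_or_ne K 0
  · refine .of_subsingleton (fun z hz w hw => ?_)
      (one_le_mul_of_one_le_of_one_le hC' (Real.one_le_rpow hL hε.le))
    exact (nsq_eq_zero.1 hz.1).trans (nsq_eq_zero.1 hw.1).symm
  have hnorm : ∀ z ∈ S, ∀ w ∈ S,
      (gaussianNorm (toGaussianInt z - toGaussianInt w) : ℝ) ≤ 8 * L ^ 2 := by
    intro z hz w hw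
    refine le_of_eq_of_le ?_ (nsq_sub_le_of_mem_closedBall hz.2 hw.2)
    exact_mod_cast natCast_gaussianNorm_toGaussianInt (z - w)
  have himage : CardLE ((fun z => (toGaussianInt z, star (toGaussianInt z))) '' S)
      (C * (8 * L ^ 2 * (8 * L ^ 2)) ^ (ε / 4)) := by
    refine hcount K (mod_cast hK) _ _ (by nlinarith) (by nlinarith) _ ?_ ?_
    · rintro _ ⟨z, hz, rfl⟩
      exact (toGaussianInt_mul_star z).trans (congrArg _ hz.1)
    · rintro _ ⟨z, hz, rfl⟩ _ ⟨w, hw, rfl⟩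
      rw [← star_sub, gaussianNorm_star]
      exact ⟨hnorm z hz w hw, hnorm z hz w hw⟩
  refine (himage.of_injOn (Set.mapsTo_image _ S) fun z _ w _ hzw => ?_).mono subset_rfl
    (le_of_eq ?_)
  · exact toGaussianInt_injective (congrArg Prod.fst hzw)
  · rw [mul_assoc C, show 8 * L ^ 2 * (8 * L ^ 2) = 64 * L ^ 4 by ring,
      Real.mul_rpow (by norm_num) (by positivity), ← Real.rpow_natCast_mul (by positivity)]
    norm_num [mul_div_cancel₀]

theorem exists_cardLE_nsq_add_nsq_sub_eq {ε : ℝ} (hε : 0 < ε) :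
    ∃ C, 1 ≤ C ∧ ∀ (K : ℤ) (a : ℤ × ℤ) (L : ℝ), 1 ≤ L →
      CardLE {z : ℤ × ℤ | nsq z + nsq (a - z) = K ∧ z ∈ closedBall 0 L} (C * L ^ ε) := by
  obtain ⟨C, hC, hcount⟩ := exists_cardLE_nsq_eq hε
  refine ⟨C * 2 ^ ε, one_le_mul_of_one_le_of_one_le hC (Real.one_le_rpow (by norm_num) hε.le),
    fun K a L hL => ?_⟩
  -- The midpoint of `z` and `a - z` is fixed, so `2z - a` runs over a circle.
  have hcircle := hcount (2 * K - nsq a) (-a) (2 * L) (by linarith)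
  refine (hcircle.of_injOn (f := fun z => z + z - a) (fun z hz => ⟨?_, ?_⟩) ?_).mono subset_rfl ?_
  · rw [← hz.1]
    simp only [nsq, Prod.fst_sub, Prod.snd_sub, Prod.fst_add, Prod.snd_add]
    ring
  · rw [mem_closedBall, dist_eq_norm, sub_neg_eq_add, sub_add_cancel, two_mul]
    exact norm_add_le_of_le (mem_closedBall_zero_iff.1 hz.2) (mem_closedBall_zero_iff.1 hz.2)
  · intro z _ w _ hzw
    simp only [sub_left_inj, Prod.ext_iff, Prod.fst_add, Prod.snd_add] at hzw
    exact Prod.ext (by linarith [hzw.1]) (by linarith [hzw.2])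
  · rw [mul_assoc C, Real.mul_rpow (by norm_num) (by positivity)]

theorem cardLE_int_closedBall (c : ℤ) {L : ℝ} (hL : 1 ≤ L) : CardLE (closedBall c L) (3 * L) := by
  rw [Int.closedBall_eq_Icc]
  refine ⟨Set.finite_Icc _ _, ?_⟩
  have hceil : (c - L : ℝ) ≤ ⌈(c - L : ℝ)⌉ := Int.le_ceil _
  have hfloor : (⌊(c + L : ℝ)⌋ : ℝ) ≤ c + L := Int.floor_le _
  have hle : ⌈(c - L : ℝ)⌉ ≤ ⌊(c + L : ℝ)⌋ + 1 := by
    have hc₁ : ⌈(c - L : ℝ)⌉ ≤ c := Int.ceil_le.2 (by linarith)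
    have hc₂ : c ≤ ⌊(c + L : ℝ)⌋ := Int.le_floor.2 (by linarith)
    omega
  have hcard : ((Set.Icc ⌈(c - L : ℝ)⌉ ⌊(c + L : ℝ)⌋).ncard : ℤ) =
      ⌊(c + L : ℝ)⌋ + 1 - ⌈(c - L : ℝ)⌉ := by
    rw [← Finset.coe_Icc, Set.ncard_coe_finset, Int.card_Icc_of_le _ _ hle]
  have hcard' := congrArg (Int.cast : ℤ → ℝ) hcard
  push_cast at hcard'
  linarith

theorem cardLE_int_prod_closedBall (c : ℤ × ℤ) {L : ℝ} (hL : 1 ≤ L) :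
    CardLE (closedBall c L) (9 * L ^ 2) := by
  rw [← closedBall_prod_same]
  refine ((cardLE_int_closedBall c.1 hL).prod (cardLE_int_closedBall c.2 hL)).mono subset_rfl ?_
  exact le_of_eq (by ring)

theorem mem_closedBall_prod_iff {X Y : Type*} [PseudoMetricSpace X] [PseudoMetricSpace Y]
    {z c : X × Y} {r : ℝ} :
    z ∈ closedBall c r ↔ z.1 ∈ closedBall c.1 r ∧ z.2 ∈ closedBall c.2 r := by
  rw [← Set.mem_prod, closedBall_prod_same]

theorem swap_mem_closedBall_swap_iff {X Y : Type*} [PseudoMetricSpace X] [PseudoMetricSpace Y]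
    {z c : X × Y} {r : ℝ} : z.swap ∈ closedBall c.swap r ↔ z ∈ closedBall c r := by
  rw [mem_closedBall_prod_iff, mem_closedBall_prod_iff, and_comm]
  rfl

/-- The pairs of nonzero lattice vectors with inner product `μ`, the first within sup-distance `L`
of `c` and the second within sup-distance `M` of `d`. -/
def innerPairs (μ : ℤ) (c d : ℤ × ℤ) (L M : ℝ) : Set ((ℤ × ℤ) × (ℤ × ℤ)) :=
  {p | p.1 ≠ 0 ∧ p.2 ≠ 0 ∧ p.1.1 * p.2.1 + p.1.2 * p.2.2 = μ ∧
    p.1 ∈ closedBall c L ∧ p.2 ∈ closedBall d M}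

theorem map_swap_mem_innerPairs {μ : ℤ} {c d : ℤ × ℤ} {L M : ℝ} {p : (ℤ × ℤ) × (ℤ × ℤ)}
    (hp : p ∈ innerPairs μ c d L M) :
    p.map Prod.swap Prod.swap ∈ innerPairs μ c.swap d.swap L M := by
  obtain ⟨h₁, h₂, hμ, hc, hd⟩ := hp
  refine ⟨?_, ?_, (add_comm _ _).trans hμ, swap_mem_closedBall_swap_iff.2 hc,
    swap_mem_closedBall_swap_iff.2 hd⟩
  · exact Prod.swap_injective.ne h₁
  · exact Prod.swap_injective.ne h₂

theorem innerPairs_subset_union (μ : ℤ) (c d : ℤ × ℤ) (L M : ℝ) :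
    innerPairs μ c d L M ⊆
      {p ∈ innerPairs μ c d L M | p.1.1 * p.2.1 ≠ 0 ∨ p.1.1 = 0 ∧ p.2.2 = 0} ∪
      {p ∈ innerPairs μ c d L M | p.1.2 * p.2.2 ≠ 0 ∨ p.1.2 = 0 ∧ p.2.1 = 0} := by
  rintro p hp
  have h₁ : ¬(p.1.1 = 0 ∧ p.1.2 = 0) := fun h => hp.1 (Prod.ext h.1 h.2)
  have h₂ : ¬(p.2.1 = 0 ∧ p.2.2 = 0) := fun h => hp.2.1 (Prod.ext h.1 h.2)
  rw [← Set.sep_or]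
  refine ⟨hp, ?_⟩
  simp only [mul_ne_zero_iff]
  tauto

theorem exists_cardLE_innerPairs_sep_mul_ne_zero {ε : ℝ} (hε : 0 < ε) :
    ∃ C, 1 ≤ C ∧ ∀ (μ : ℤ) (c d : ℤ × ℤ) (L M : ℝ), 1 ≤ L → 1 ≤ M →
      CardLE {p ∈ innerPairs μ c d L M | p.1.1 * p.2.1 ≠ 0} (C * (L * M) ^ (1 + ε)) := by
  obtain ⟨C, hC, hcount⟩ := exists_cardLE_int_mul_eq hε
  refine ⟨9 * C, by linarith, fun μ c d L M hL hM => ?_⟩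
  have hsnd : CardLE (closedBall c.2 L ×ˢ closedBall d.2 M) (3 * L * (3 * M)) :=
    (cardLE_int_closedBall c.2 hL).prod (cardLE_int_closedBall d.2 hM)
  refine (hsnd.of_fiberwise (B := C * (L * M) ^ ε) (f := fun p => (p.1.2, p.2.2)) ?_ ?_ ?_).mono
    subset_rfl ?_
  · rintro p ⟨⟨-, -, -, hc, hd⟩, -⟩
    exact ⟨(mem_closedBall_prod_iff.1 hc).2, (mem_closedBall_prod_iff.1 hd).2⟩
  · positivity
  · rintro ⟨⟨x, y⟩, x', y'⟩ ⟨⟨-, -, rfl, -, -⟩, hne⟩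
    refine (hcount (x * x') c.1 d.1 L M hne hL hM).of_injOn (f := fun p => (p.1.1, p.2.1)) ?_ ?_
    · rintro p ⟨⟨⟨-, -, hp, hc, hd⟩, -⟩, hfib⟩
      rw [Prod.mk.injEq] at hfib
      refine ⟨?_, (mem_closedBall_prod_iff.1 hc).1, (mem_closedBall_prod_iff.1 hd).1⟩
      rw [hfib.1, hfib.2] at hp
      exact add_right_cancel hp
    · rintro p ⟨-, hp⟩ q ⟨-, hq⟩ hpq
      simp only [Prod.mk.injEq] at hp hq hpq
      exact Prod.ext (Prod.ext hpq.1 (hp.1.trans hq.1.symm))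
        (Prod.ext hpq.2 (hp.2.trans hq.2.symm))
  · rw [Real.rpow_one_add' (by positivity) (by positivity)]
    exact le_of_eq (by ring)

theorem cardLE_innerPairs_sep_eq_zero (μ : ℤ) (c d : ℤ × ℤ) {L M : ℝ} (hL : 1 ≤ L) (hM : 1 ≤ M) :
    CardLE {p ∈ innerPairs μ c d L M | p.1.1 = 0 ∧ p.2.2 = 0} (9 * (L * M)) := by
  have hbox : CardLE (closedBall c.2 L ×ˢ closedBall d.1 M) (3 * L * (3 * M)) :=
    (cardLE_int_closedBall c.2 hL).prod (cardLE_int_closedBall d.1 hM)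
  refine (hbox.of_injOn (f := fun p => (p.1.2, p.2.1)) ?_ ?_).mono subset_rfl
    (le_of_eq (by ring))
  · rintro p ⟨⟨-, -, -, hc, hd⟩, -⟩
    exact ⟨(mem_closedBall_prod_iff.1 hc).2, (mem_closedBall_prod_iff.1 hd).1⟩
  · rintro p ⟨-, hp⟩ q ⟨-, hq⟩ hpq
    rw [Prod.mk.injEq] at hpq
    exact Prod.ext (Prod.ext (hp.1.trans hq.1.symm) hpq.1)
      (Prod.ext hpq.2 (hp.2.trans hq.2.symm))

theorem exists_cardLE_innerPairs {ε : ℝ} (hε : 0 < ε) :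
    ∃ C, 1 ≤ C ∧ ∀ (μ : ℤ) (c d : ℤ × ℤ) (L M : ℝ), 1 ≤ L → 1 ≤ M →
      CardLE (innerPairs μ c d L M) (C * (L * M) ^ (1 + ε)) := by
  obtain ⟨C, hC, hcount⟩ := exists_cardLE_innerPairs_sep_mul_ne_zero hε
  refine ⟨2 * (C + 9), by linarith, fun μ c d L M hL hM => ?_⟩
  have hpow : L * M ≤ (L * M) ^ (1 + ε) :=
    Real.self_le_rpow_of_one_le (one_le_mul_of_one_le_of_one_le hL hM) (by linarith)
  have hhalf : ∀ c d : ℤ × ℤ,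
      CardLE {p ∈ innerPairs μ c d L M | p.1.1 * p.2.1 ≠ 0 ∨ p.1.1 = 0 ∧ p.2.2 = 0}
        ((C + 9) * (L * M) ^ (1 + ε)) := fun c d => by
    rw [Set.sep_or]
    refine ((hcount μ c d L M hL hM).union (cardLE_innerPairs_sep_eq_zero μ c d hL hM)).mono
      subset_rfl ?_
    linarith
  have hswap : CardLE
      {p ∈ innerPairs μ c d L M | p.1.2 * p.2.2 ≠ 0 ∨ p.1.2 = 0 ∧ p.2.1 = 0}
      ((C + 9) * (L * M) ^ (1 + ε)) :=
    (hhalf c.swap d.swap).of_injOn (fun p hp => ⟨map_swap_mem_innerPairs hp.1, hp.2⟩)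
      (Prod.swap_injective.prodMap Prod.swap_injective).injOn
  exact ((hhalf c d).union hswap).mono (innerPairs_subset_union μ c d L M) (by linarith)

end Lattice

section Rows

open Metric

theorem mem_closedBall_of_simDyadic {N : ℝ} {n : ℤ × ℤ} (h : simDyadic N n) :
    n ∈ closedBall 0 N := by
  have hn : znorm n ≤ N := by
    obtain ⟨rfl, h⟩ | ⟨-, -, h⟩ := h <;> exact h
  rw [mem_closedBall_zero_iff, Prod.norm_def, Int.norm_eq_abs, Int.norm_eq_abs]
  exact (max_le (Real.abs_le_sqrt (le_add_of_nonneg_right (sq_nonneg _)))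
    (Real.abs_le_sqrt (le_add_of_nonneg_left (sq_nonneg _)))).trans hn

-- `φ(n̄)` is even here, so the division is exact.
theorem inner_sub_sub_eq_of_phiFn_eq {m : ℤ} {n n₁ n₂ n₃ : ℤ × ℤ} (hn : n = n₁ - n₂ + n₃)
    (hm : phiFn n n₁ n₂ n₃ = m) :
    (n - n₁).1 * (n - n₃).1 + (n - n₁).2 * (n - n₃).2 = m / 2 := by
  subst hn
  refine (Int.ediv_eq_of_eq_mul_right two_ne_zero ?_).symm
  rw [← hm]
  simp only [phiFn, nsq, Prod.fst_sub, Prod.snd_sub, Prod.fst_add, Prod.snd_add]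
  ring

/-- The row of the support of the base tensor `h^{𝐍,(m)}` at `n`: the triples `(n₁, n₂, n₃)` with
`h^{𝐍,(m)}(n, n₁, n₂, n₃) = 1`. -/
def baseRow (N N₁ N₂ N₃ : ℝ) (m : ℤ) (n : ℤ × ℤ) : Set ((ℤ × ℤ) × (ℤ × ℤ) × (ℤ × ℤ)) :=
  {t | SMem N N₁ N₂ N₃ m n t.1 t.2.1 t.2.2}

variable {N N₁ N₂ N₃ : ℝ} {m : ℤ} {n n₁ n₂ n₃ : ℤ × ℤ}

theorem SMem.add_eq_add (h : SMem N N₁ N₂ N₃ m n n₁ n₂ n₃) : n + n₂ = n₁ + n₃ := by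
  rw [h.1]
  abel

theorem SMem.symm (h : SMem N N₁ N₂ N₃ m n n₁ n₂ n₃) : SMem N N₃ N₂ N₁ m n n₃ n₂ n₁ := by
  obtain ⟨hn, hn₁, hn₃, hm, h₀, h₁, h₂, h₃⟩ := h
  refine ⟨by rw [hn]; abel, hn₃, hn₁, ?_, h₀, h₃, h₂, h₁⟩
  rw [← hm, phiFn, phiFn]
  ring

theorem CardLE.baseRow_symm {B : ℝ} (h : CardLE (baseRow N N₃ N₂ N₁ m n) B) :
    CardLE (baseRow N N₁ N₂ N₃ m n) B :=
  h.of_injOn (f := fun t => (t.2.2, t.2.1, t.1)) (fun _ ht => SMem.symm ht)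
    (fun t _ t' _ h => by
      simp only [Prod.mk.injEq] at h
      exact Prod.ext h.2.2 (Prod.ext h.2.1 h.1))

theorem exists_cardLE_baseRow_sq_second_mul_rpow_first {ε : ℝ} (hε : 0 < ε) :
    ∃ C, 1 ≤ C ∧ ∀ (N N₁ N₂ N₃ : ℝ) (m : ℤ) (n : ℤ × ℤ), 1 ≤ N₁ → 1 ≤ N₂ →
      CardLE (baseRow N N₁ N₂ N₃ m n) (C * (N₂ ^ 2 * N₁ ^ ε)) := by
  obtain ⟨C, hC, hcount⟩ := exists_cardLE_nsq_add_nsq_sub_eq hε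
  refine ⟨9 * C, by linarith, fun N N₁ N₂ N₃ m n h₁ h₂ => ?_⟩
  refine ((cardLE_int_prod_closedBall 0 h₂).of_fiberwise (B := C * N₁ ^ ε) (f := fun t => t.2.1)
    (fun t ht => ?_) (by positivity) fun t₀ _ => ?_).mono subset_rfl (le_of_eq (by ring))
  · obtain ⟨-, -, -, -, -, -, ht₂, -⟩ := ht
    exact mem_closedBall_of_simDyadic ht₂
  refine (hcount (nsq n + nsq t₀.2.1 - m) (n + t₀.2.1) N₁ h₁).of_injOn (f := fun t => t.1) ?_ ?_
  · rintro t ⟨ht, ht₀⟩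
    obtain ⟨-, -, -, hm, -, ht₁, -, -⟩ := id ht
    refine ⟨?_, mem_closedBall_of_simDyadic ht₁⟩
    rw [← ht₀, ht.add_eq_add, add_sub_cancel_left, ← hm, phiFn]
    ring
  · rintro t ⟨ht, ht₀⟩ t' ⟨ht', ht'₀⟩ (h : t.1 = t'.1)
    have h₂ : t.2.1 = t'.2.1 := ht₀.trans ht'₀.symm
    have h₃ : t.1 + t.2.2 = t.1 + t'.2.2 := by rw [← ht.add_eq_add, h₂, h, ht'.add_eq_add]
    exact Prod.ext h (Prod.ext h₂ (add_left_cancel h₃))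

theorem cardLE_baseRow_of_innerPairs {B L M : ℝ} {c d : ℤ × ℤ}
    (hB : CardLE (innerPairs (m / 2) c d L M) B)
    (hball : ∀ t ∈ baseRow N N₁ N₂ N₃ m n, n - t.1 ∈ closedBall c L ∧ n - t.2.2 ∈ closedBall d M) :
    CardLE (baseRow N N₁ N₂ N₃ m n) B := by
  refine hB.of_injOn (f := fun t => (n - t.1, n - t.2.2)) (fun t ht => ?_) ?_
  · obtain ⟨hn, hn₁, hn₃, hm, -⟩ := id ht
    exact ⟨sub_ne_zero.2 hn₁, sub_ne_zero.2 hn₃, inner_sub_sub_eq_of_phiFn_eq hn hm,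
      hball t ht⟩
  · intro t ht t' ht' h
    simp only [Prod.mk.injEq, sub_right_inj] at h
    have h₂ : n + t.2.1 = n + t'.2.1 := by rw [ht.add_eq_add, h.1, h.2, ht'.add_eq_add]
    exact Prod.ext h.1 (Prod.ext (add_left_cancel h₂) h.2)

theorem sub_mem_closedBall_of_simDyadic {x : ℤ × ℤ} (hx : simDyadic N x) :
    n - x ∈ closedBall n N := by
  rw [mem_closedBall, dist_self_sub_left]
  exact mem_closedBall_zero_iff.1 (mem_closedBall_of_simDyadic hx)

theorem exists_cardLE_baseRow_rpow_first_mul_third {ε : ℝ} (hε : 0 < ε) :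
    ∃ C, 1 ≤ C ∧ ∀ (N N₁ N₂ N₃ : ℝ) (m : ℤ) (n : ℤ × ℤ), 1 ≤ N₁ → 1 ≤ N₃ →
      CardLE (baseRow N N₁ N₂ N₃ m n) (C * (N₁ * N₃) ^ (1 + ε)) := by
  obtain ⟨C, hC, hpairs⟩ := exists_cardLE_innerPairs hε
  refine ⟨C, hC, fun N N₁ N₂ N₃ m n h₁ h₃ =>
    cardLE_baseRow_of_innerPairs (hpairs (m / 2) n n N₁ N₃ h₁ h₃) fun t ht => ?_⟩
  obtain ⟨-, -, -, -, -, ht₁, -, ht₃⟩ := ht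
  exact ⟨sub_mem_closedBall_of_simDyadic ht₁, sub_mem_closedBall_of_simDyadic ht₃⟩

theorem exists_cardLE_baseRow_rpow_first_mul_second {ε : ℝ} (hε : 0 < ε) :
    ∃ C, 1 ≤ C ∧ ∀ (N N₁ N₂ N₃ : ℝ) (m : ℤ) (n : ℤ × ℤ), 1 ≤ N₁ → 1 ≤ N₂ →
      CardLE (baseRow N N₁ N₂ N₃ m n) (C * (N₁ * N₂) ^ (1 + ε)) := by
  obtain ⟨C, hC, hpairs⟩ := exists_cardLE_innerPairs hε
  obtain ⟨C', hC', hcircle⟩ := exists_cardLE_baseRow_sq_second_mul_rpow_first hε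
  refine ⟨max (C * 2 ^ (1 + ε)) C', le_max_of_le_right hC', fun N N₁ N₂ N₃ m n h₁ h₂ => ?_⟩
  obtain h₁₂ | h₂₁ := le_total N₁ N₂
  · refine (cardLE_baseRow_of_innerPairs (hpairs (m / 2) n 0 N₁ (2 * N₂) h₁ (by linarith))
      fun t ht => ?_).mono subset_rfl ?_
    · obtain ⟨hn, -, -, -, -, ht₁, ht₂, -⟩ := ht
      refine ⟨sub_mem_closedBall_of_simDyadic ht₁, ?_⟩
      rw [hn, add_sub_cancel_right, mem_closedBall_zero_iff, two_mul]
      refine norm_sub_le_of_le (?_ : ‖t.1‖ ≤ N₂) ?_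
      · exact (mem_closedBall_zero_iff.1 (mem_closedBall_of_simDyadic ht₁)).trans h₁₂
      · exact mem_closedBall_zero_iff.1 (mem_closedBall_of_simDyadic ht₂)
    · rw [mul_left_comm, Real.mul_rpow (by norm_num) (by positivity), ← mul_assoc]
      gcongr
      exact le_max_left _ _
  · have hbound : N₂ ^ 2 * N₁ ^ ε ≤ (N₁ * N₂) ^ (1 + ε) := by
      rw [Real.rpow_one_add' (by positivity) (by positivity), sq]
      gcongr
      exact le_mul_of_one_le_right (by positivity) h₂
    refine (hcircle N N₁ N₂ N₃ m n h₁ h₂).mono subset_rfl ?_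
    gcongr
    exact le_max_right _ _

theorem exists_cardLE_baseRow_rpow_first_mul_min {ε : ℝ} (hε : 0 < ε) :
    ∃ C, 1 ≤ C ∧ ∀ (N N₁ N₂ N₃ : ℝ) (m : ℤ) (n : ℤ × ℤ), 1 ≤ N₁ → 1 ≤ N₂ → 1 ≤ N₃ →
      CardLE (baseRow N N₁ N₂ N₃ m n) (C * (N₁ * min N₂ N₃) ^ (1 + ε)) := by
  obtain ⟨C, hC, hsecond⟩ := exists_cardLE_baseRow_rpow_first_mul_second hε
  obtain ⟨C', -, hthird⟩ := exists_cardLE_baseRow_rpow_first_mul_third hε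
  refine ⟨max C C', le_max_of_le_left hC, fun N N₁ N₂ N₃ m n h₁ h₂ h₃ => ?_⟩
  obtain hmin | hmin := min_choice N₂ N₃ <;> rw [hmin]
  · refine (hsecond N N₁ N₂ N₃ m n h₁ h₂).mono subset_rfl ?_
    gcongr
    exact le_max_left _ _
  · refine (hthird N N₁ N₂ N₃ m n h₁ h₃).mono subset_rfl ?_
    gcongr
    exact le_max_right _ _

theorem dmed3_mul_dmin3_eq (a b c : ℝ) :
    dmed3 a b c * dmin3 a b c = min a c * min b (max a c) := by
  rw [dmed3, dmax3, dmin3]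
  grind

theorem dmed3_mul_dmin3_nonneg {a b c : ℝ} (ha : 0 ≤ a) (hb : 0 ≤ b) (hc : 0 ≤ c) :
    0 ≤ dmed3 a b c * dmin3 a b c := by
  rw [dmed3_mul_dmin3_eq]
  positivity

theorem exists_cardLE_baseRow {ε : ℝ} (hε : 0 < ε) :
    ∃ C, 1 ≤ C ∧ ∀ (N N₁ N₂ N₃ : ℝ) (m : ℤ) (n : ℤ × ℤ), 1 ≤ N₁ → 1 ≤ N₂ → 1 ≤ N₃ →
      CardLE (baseRow N N₁ N₂ N₃ m n) ((C * min (N₂ * (min N₁ N₃) ^ ε)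
        ((dmed3 N₁ N₂ N₃ * dmin3 N₁ N₂ N₃) ^ ((1 : ℝ) / 2 + ε))) ^ 2) := by
  obtain ⟨C, hC, hcircle⟩ :=
    exists_cardLE_baseRow_sq_second_mul_rpow_first (ε := ε * 2) (by positivity)
  obtain ⟨C', -, hpairs⟩ := exists_cardLE_baseRow_rpow_first_mul_min (ε := ε * 2) (by positivity)
  refine ⟨max C C', le_max_of_le_left hC, fun N N₁ N₂ N₃ m n h₁ h₂ h₃ => ?_⟩
  wlog h : N₁ ≤ N₃ generalizing N₁ N₃
  · rw [dmed3_mul_dmin3_eq, min_comm N₁, max_comm N₁, ← dmed3_mul_dmin3_eq]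
    exact (this N₃ N₁ h₃ h₁ (le_of_not_ge h)).baseRow_symm
  rw [dmed3_mul_dmin3_eq, min_eq_left h, max_eq_right h, mul_pow]
  have hsq : max C C' ≤ max C C' ^ 2 := le_self_pow₀ (le_max_of_le_left hC) two_ne_zero
  obtain hmin | hmin := min_choice (N₂ * N₁ ^ ε) ((N₁ * min N₂ N₃) ^ ((1 : ℝ) / 2 + ε))
  · rw [hmin, mul_pow, ← Real.rpow_mul_natCast (by positivity), Nat.cast_two]
    refine (hcircle N N₁ N₂ N₃ m n h₁ h₂).mono subset_rfl ?_
    gcongr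
    exact (le_max_left _ _).trans hsq
  · rw [hmin, ← Real.rpow_mul_natCast (by positivity), Nat.cast_two, add_mul,
      one_div_mul_cancel two_ne_zero]
    refine (hpairs N N₁ N₂ N₃ m n h₁ h₂ h₃).mono subset_rfl ?_
    gcongr
    exact (le_max_right _ _).trans hsq

end Rows

section OperatorNorm

theorem sq_tsum_indicator_le {β : Type*} {S : Set β} {B : ℝ} (hS : CardLE S B) (f : β → ℝ) :
    (∑' t, S.indicator f t) ^ 2 ≤ B * ∑ t ∈ hS.finite.toFinset, f t ^ 2 := by
  have hsum : ∑' t, S.indicator f t = ∑ t ∈ hS.finite.toFinset, f t := by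
    rw [← Finset.tsum_subtype', hS.finite.coe_toFinset, tsum_subtype]
  rw [hsum]
  refine sq_sum_le_card_mul_sum_sq.trans ?_
  gcongr
  · rw [← Set.ncard_eq_toFinset_card S hS.finite]
    exact hS.ncard_le

theorem sqrt_tsum_sq_tsum_indicator_le {α β : Type*} {S : α → Set β} {B : ℝ} (hB : 0 ≤ B)
    (hS : ∀ n, CardLE (S n) (B ^ 2)) (hdisj : Pairwise (Function.onFun Disjoint S)) {f : β → ℝ}
    (hf : Summable fun t => f t ^ 2) :
    √(∑' n, (∑' t, (S n).indicator f t) ^ 2) ≤ B * √(∑' t, f t ^ 2) := by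
  classical
  rw [← Real.sqrt_sq hB, ← Real.sqrt_mul (sq_nonneg B)]
  refine Real.sqrt_le_sqrt (Real.tsum_le_of_sum_le (fun n => sq_nonneg _) fun s => ?_)
  have hdisj' : (s : Set α).PairwiseDisjoint fun n => (hS n).finite.toFinset := fun n _ n' _ h =>
    Set.Finite.disjoint_toFinset.2 (hdisj h)
  calc ∑ n ∈ s, (∑' t, (S n).indicator f t) ^ 2
      ≤ ∑ n ∈ s, B ^ 2 * ∑ t ∈ (hS n).finite.toFinset, f t ^ 2 :=
        Finset.sum_le_sum fun n _ => sq_tsum_indicator_le (hS n) f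
    _ = B ^ 2 * ∑ t ∈ s.biUnion fun n => (hS n).finite.toFinset, f t ^ 2 := by
        rw [Finset.sum_biUnion hdisj', Finset.mul_sum]
    _ ≤ B ^ 2 * ∑' t, f t ^ 2 := by
        gcongr
        exact hf.sum_le_tsum _ fun _ _ => sq_nonneg _

theorem hten_mul_eq_indicator (N N₁ N₂ N₃ : ℝ) (m : ℤ) (n : ℤ × ℤ)
    (f : (ℤ × ℤ) × (ℤ × ℤ) × (ℤ × ℤ) → ℝ) (t : (ℤ × ℤ) × (ℤ × ℤ) × (ℤ × ℤ)) :
    hten N N₁ N₂ N₃ m n t.1 t.2.1 t.2.2 * f t = (baseRow N N₁ N₂ N₃ m n).indicator f t := by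
  classical
  rw [hten, Set.indicator_apply, ite_mul, one_mul, zero_mul]
  congr

theorem pairwise_disjoint_baseRow (N N₁ N₂ N₃ : ℝ) (m : ℤ) :
    Pairwise (Function.onFun Disjoint (baseRow N N₁ N₂ N₃ m)) := fun _ _ hne =>
  Set.disjoint_left.2 fun _ ht ht' => hne (ht.1.trans ht'.1.symm)

end OperatorNorm

theorem stmt12_general (ε : ℝ) (hε : 0 < ε) :
    ∃ C : ℝ, 0 < C ∧ ∀ N N₁ N₂ N₃ : ℝ, 1 ≤ N₁ → 1 ≤ N₂ → 1 ≤ N₃ → ∀ m : ℤ,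
      ∀ f : (ℤ × ℤ) × (ℤ × ℤ) × (ℤ × ℤ) → ℝ, Summable (fun t => f t ^ 2) →
        Real.sqrt (∑' n : ℤ × ℤ,
            (∑' t : (ℤ × ℤ) × (ℤ × ℤ) × (ℤ × ℤ),
              hten N N₁ N₂ N₃ m n t.1 t.2.1 t.2.2 * f t) ^ 2) ≤
          C * min (N₂ * (min N₁ N₃) ^ ε)
                  ((dmed3 N₁ N₂ N₃ * dmin3 N₁ N₂ N₃) ^ ((1 : ℝ) / 2 + ε)) *
            Real.sqrt (∑' t : (ℤ × ℤ) × (ℤ × ℤ) × (ℤ × ℤ), f t ^ 2) := by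
  obtain ⟨C, hC, hrow⟩ := exists_cardLE_baseRow hε
  refine ⟨C, by positivity, fun N N₁ N₂ N₃ h₁ h₂ h₃ m f hf => ?_⟩
  simp only [hten_mul_eq_indicator]
  refine sqrt_tsum_sq_tsum_indicator_le ?_ (fun n => hrow N N₁ N₂ N₃ m n h₁ h₂ h₃)
    (pairwise_disjoint_baseRow N N₁ N₂ N₃ m) hf
  have := dmed3_mul_dmin3_nonneg (zero_le_one.trans h₁) (zero_le_one.trans h₂)
    (zero_le_one.trans h₃)
  positivity

theorem IsDyadic.one_le {N : ℝ} (hN : IsDyadic N) : 1 ≤ N := by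
  obtain ⟨k, rfl⟩ := hN
  exact one_le_pow₀ one_le_two

theorem stmt12 (ε : ℝ) (hε : 0 < ε) :
    ∃ C : ℝ, 0 < C ∧ ∀ N N₁ N₂ N₃ : ℝ,
      IsDyadic N → IsDyadic N₁ → IsDyadic N₂ → IsDyadic N₃ → ∀ m : ℤ,
      ∀ f : (ℤ × ℤ) × (ℤ × ℤ) × (ℤ × ℤ) → ℝ, Summable (fun t => f t ^ 2) →
        Real.sqrt (∑' n : ℤ × ℤ,
            (∑' t : (ℤ × ℤ) × (ℤ × ℤ) × (ℤ × ℤ),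
              hten N N₁ N₂ N₃ m n t.1 t.2.1 t.2.2 * f t) ^ 2) ≤
          C * min (N₂ * (min N₁ N₃) ^ ε)
                  ((dmed3 N₁ N₂ N₃ * dmin3 N₁ N₂ N₃) ^ ((1 : ℝ) / 2 + ε)) *
            Real.sqrt (∑' t : (ℤ × ℤ) × (ℤ × ℤ) × (ℤ × ℤ), f t ^ 2) := by
  obtain ⟨C, hC, hbound⟩ := stmt12_general ε hε
  exact ⟨C, hC, fun N N₁ N₂ N₃ _ h₁ h₂ h₃ => hbound N N₁ N₂ N₃ h₁.one_le h₂.one_le h₃.one_le⟩
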